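/- Fix integers g ≥ 0, k ≥ 1, n ≥ 1. Let 𝛍 = (μ¹,…,μᵏ) be a k-tuple of partitions of n with δ(𝛍) ≥ 0, and let 𝛎¹,…,𝛎ˢ be non-zero k-tuples, where 𝛎ᵖ = (ν^{1,p},…,ν^{k,p}) is a k-tuple of partitions of n_p ≥ 1, such that for each i = 1,…,k the partitions ν^{i,1},…,ν^{i,s} sum to μⁱ up to permutation of parts. Then Σ_{p=1}^s Δ(𝛎ᵖ) ≤ Δ(𝛍), and equality holds if and only if either s = 1 (in which case 𝛎¹ = 𝛍), or Δ(𝛍) = 0 and Δ(𝛎ᵖ) = 0 for every p. -/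

import Mathlib

/-- A partition of `n`: a weakly decreasing, eventually zero sequence of natural
numbers (0-indexed: `parts i` is `λ_{i+1}`) summing to `n`. -/
structure PartitionOf (n : ℕ) where
  parts : ℕ → ℕ
  antitone : ∀ ⦃i j : ℕ⦄, i ≤ j → parts j ≤ parts i
  eventually_zero : ∃ N, ∀ i, N ≤ i → parts i = 0
  sum_eq : ∑ᶠ i, parts i = n

/-- `Δ(𝛒) = ½(2g−2+k)m² − ½ Σ_{i,j} (ρⁱⱼ)²` for a `k`-tuple `𝛒` of partitions of `m`. -/
noncomputable def DeltaStat (g k : ℕ) {m : ℕ} (ρ : Fin k → PartitionOf m) : ℚ :=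
  (2 * (g : ℚ) - 2 + (k : ℚ)) * (m : ℚ) ^ 2 / 2
    - (∑ i, ∑ᶠ j, ((ρ i).parts j : ℚ) ^ 2) / 2

/-- `δ(𝛒) = (2g−2+k)m − Σ_i ρⁱ₁` for a `k`-tuple `𝛒` of partitions of `m`. -/
noncomputable def deltaStat (g k : ℕ) {m : ℕ} (ρ : Fin k → PartitionOf m) : ℚ :=
  (2 * (g : ℚ) - 2 + (k : ℚ)) * (m : ℚ) - ∑ i, ((ρ i).parts 0 : ℚ)

/-- `ν¹,…,νˢ` sum to `μ` up to permutation of parts: there are rearrangements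
`xᵖ` of the zero-padded part sequences of the `νᵖ` with `Σ_p xᵖᵢ = μᵢ` for all `i`. -/
def SumsToUpToPerm {s : ℕ} {m : Fin s → ℕ} {n : ℕ}
    (ν : ∀ p : Fin s, PartitionOf (m p)) (μ : PartitionOf n) : Prop :=
  ∃ x : Fin s → ℕ → ℕ,
    (∀ p, ∃ σ : Equiv.Perm ℕ, x p = (ν p).parts ∘ σ) ∧ ∀ i, ∑ p, x p i = μ.parts i

/-!
On pairs `(a, x)`, with `x` a matrix all of whose rows sum to `a`, the quantity `2Δ` is the
quadratic form of `B((a, x), (b, y)) = c a b - ∑ xᵢⱼ yᵢⱼ`, so `2Δ(𝛍) - ∑ 2Δ(𝛎ᵖ)` is the sum of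
the cross terms `B(u, v)`, where `u` is one of the pieces and `v` the sum of the others. For
`u = (a, x)` and `v = (b, y)` nonnegative, with `xᵢⱼ + yᵢⱼ ≤ Mᵢ` and
`δ = c (a + b) - ∑ Mᵢ ≥ 0`, the identity
`(a + b)² B(u, v) = a b (a + b) δ + ∑ ((b xᵢⱼ - a yᵢⱼ)² + (Mᵢ - xᵢⱼ - yᵢⱼ) (b² xᵢⱼ + a² yᵢⱼ))`
exhibits the cross term as a sum of nonnegative quantities. If they all vanish while `a, b > 0`,
then `δ = 0`, `u` is proportional to `u + v`, and every entry of row `i` of `u + v` is `0` or `Mᵢ`;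
hence `B(u + v, u + v)` and `B(u, u)` vanish.
-/

section Antitone

variable {ι α : Type*} [LinearOrder ι] [LocallyFiniteOrderBot ι]

theorem exists_le_le_apply_of_injective {f : ι → ι} (hf : f.Injective) (i : ι) :
    ∃ l ≤ i, i ≤ f l := by
  by_contra! h
  have hmaps : Set.MapsTo f (Finset.Iic i) (Finset.Iio i) := fun l hl => by
    simpa using h l (by simpa using hl)
  have hcard := Finset.card_le_card_of_injOn f hmaps hf.injOn
  rw [← Finset.Iio_insert i, Finset.card_insert_of_notMem Finset.notMem_Iio_self] at hcard
  omega

theorem apply_comp_le_of_antitone [Preorder α] {f : ι → α} {σ : ι → ι} (hf : Antitone f)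
    (hσ : σ.Injective) (hfσ : Antitone (f ∘ σ)) (i : ι) : f (σ i) ≤ f i := by
  obtain ⟨l, hli, hil⟩ := exists_le_le_apply_of_injective hσ i
  exact (hfσ hli).trans (hf hil)

theorem comp_perm_eq_of_antitone [PartialOrder α] {f : ι → α} {σ : Equiv.Perm ι}
    (hf : Antitone f) (hfσ : Antitone (f ∘ σ)) : f ∘ σ = f := by
  funext i
  refine le_antisymm (apply_comp_le_of_antitone hf σ.injective hfσ i) ?_
  simpa using apply_comp_le_of_antitone (f := f ∘ σ) hfσ σ.symm.injective
    (by simpa [Function.comp_assoc] using hf) i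

end Antitone

theorem finsum_eq_sum_fin_comp_perm {A : Type*} [AddCommMonoid A] {f : ℕ → A}
    (σ : Equiv.Perm ℕ) {N : ℕ} (hf : ∀ j, N ≤ j → f (σ j) = 0) :
    ∑ᶠ j, f j = ∑ j : Fin N, f (σ j) := by
  rw [← finsum_comp_equiv σ, ← Finset.sum_range fun j => f (σ j)]
  refine finsum_eq_sum_of_support_subset _ fun j hj => ?_
  simpa using mt (hf j) hj

section Bilinear

variable {R V P : Type*} [CommSemiring R] [AddCommMonoid V] [Module R V] [Fintype P]
  [DecidableEq P]

theorem bilinForm_sum_self (B : LinearMap.BilinForm R V) (u : P → V) :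
    B (∑ p, u p) (∑ p, u p) =
      ∑ p, B (u p) (u p) + ∑ p, B (u p) (∑ q ∈ Finset.univ.erase p, u q) := by
  rw [← Finset.sum_add_distrib, LinearMap.BilinForm.sum_left]
  refine Finset.sum_congr rfl fun p _ => ?_
  rw [← map_add, Finset.add_sum_erase _ _ (Finset.mem_univ p)]

end Bilinear

section SplitDefect

variable {J K : Type*} [Fintype J] [CommRing K]

/-- The pointwise slack in the inequality `(a + b) * ∑ x y ≤ M * a * b` for nonnegative
`x` and `y` with sums `a` and `b` and with `x + y ≤ M`, scaled by `a + b`. -/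
def splitDefect (M a b x y : K) : K :=
  (b * x - a * y) ^ 2 + (M - (x + y)) * (b ^ 2 * x + a ^ 2 * y)

theorem sum_splitDefect (M : K) {a b : K} {x y : J → K} (hx : ∑ j, x j = a)
    (hy : ∑ j, y j = b) :
    ∑ j, splitDefect M a b (x j) (y j) = M * (a * b * (a + b)) - (a + b) ^ 2 * (x ⬝ᵥ y) := by
  calc ∑ j, splitDefect M a b (x j) (y j)
      = ∑ j, (M * b ^ 2 * x j + M * a ^ 2 * y j - (a + b) ^ 2 * (x j * y j)) :=
        Finset.sum_congr rfl fun j _ => by rw [splitDefect]; ring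
    _ = M * b ^ 2 * a + M * a ^ 2 * b - (a + b) ^ 2 * (x ⬝ᵥ y) := by
        simp only [Finset.sum_sub_distrib, Finset.sum_add_distrib, ← Finset.mul_sum, hx, hy,
          dotProduct]
    _ = M * (a * b * (a + b)) - (a + b) ^ 2 * (x ⬝ᵥ y) := by ring

variable [LinearOrder K] [IsStrictOrderedRing K] {M a b x y : K}

theorem splitDefect_nonneg (hx : 0 ≤ x) (hy : 0 ≤ y) (hM : x + y ≤ M) :
    0 ≤ splitDefect M a b x y := by
  have := sub_nonneg.2 hM
  unfold splitDefect
  positivity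

theorem eq_of_splitDefect_eq_zero (ha : 0 < a) (hb : 0 < b) (hx : 0 ≤ x) (hy : 0 ≤ y)
    (hM : x + y ≤ M) (h : splitDefect M a b x y = 0) :
    (a + b) * x = a * (x + y) ∧ (x + y) * (x + y) = M * (x + y) := by
  have := sub_nonneg.2 hM
  obtain ⟨hsq, hprod⟩ := (add_eq_zero_iff_of_nonneg (sq_nonneg _) (by positivity)).1 h
  have hprop : b * x = a * y := sub_eq_zero.1 (pow_eq_zero_iff two_ne_zero |>.1 hsq)
  refine ⟨by linear_combination hprop, ?_⟩
  have hzero : a * b * ((M - (x + y)) * (x + y)) = 0 := by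
    linear_combination hprod + (M - (x + y)) * (a - b) * hprop
  have := (mul_eq_zero.1 hzero).resolve_left (by positivity)
  linear_combination -this

end SplitDefect

section DeltaForm

variable {ι J K P : Type*} [Fintype J] [CommRing K]

/-- `2Δ` as a bilinear form: a `k`-tuple of partitions of `a` is encoded by the pair `(a, x)`,
where row `i` of the matrix `x` lists the parts of the `i`-th partition, and `c` stands for
`2g - 2 + k`. -/
def deltaForm [Fintype ι] (c : K) : LinearMap.BilinForm K (K × (ι → J → K)) :=
  LinearMap.mk₂ K (fun u v => c * (u.1 * v.1) - ∑ i, u.2 i ⬝ᵥ v.2 i)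
    (fun u u' v => by
      simp only [Prod.fst_add, Prod.snd_add, Pi.add_apply, add_dotProduct, Finset.sum_add_distrib]
      ring)
    (fun r u v => by
      simp only [Prod.smul_fst, Prod.smul_snd, Pi.smul_apply, smul_dotProduct, smul_eq_mul,
        ← Finset.mul_sum]
      ring)
    (fun u v v' => by
      simp only [Prod.fst_add, Prod.snd_add, Pi.add_apply, dotProduct_add, Finset.sum_add_distrib]
      ring)
    (fun r u v => by
      simp only [Prod.smul_fst, Prod.smul_snd, Pi.smul_apply, dotProduct_smul, smul_eq_mul,
        ← Finset.mul_sum]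
      ring)

theorem deltaForm_apply [Fintype ι] (c : K) (u v : K × (ι → J → K)) :
    deltaForm c u v = c * (u.1 * v.1) - ∑ i, u.2 i ⬝ᵥ v.2 i := rfl

theorem sq_mul_deltaForm [Fintype ι] (c : K) (M : ι → K) {u v : K × (ι → J → K)}
    (hu : ∀ i, ∑ j, u.2 i j = u.1) (hv : ∀ i, ∑ j, v.2 i j = v.1) :
    (u + v).1 ^ 2 * deltaForm c u v =
      u.1 * v.1 * (u + v).1 * (c * (u + v).1 - ∑ i, M i) +
        ∑ i, ∑ j, splitDefect (M i) u.1 v.1 (u.2 i j) (v.2 i j) := by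
  simp only [sum_splitDefect _ (hu _) (hv _), Finset.sum_sub_distrib, ← Finset.sum_mul,
    ← Finset.mul_sum, deltaForm_apply, Prod.fst_add]
  ring

theorem deltaForm_self_eq_zero_of_mul_self_eq [Fintype ι] {c : K} {M : ι → K}
    {u : K × (ι → J → K)} (hu : ∀ i, ∑ j, u.2 i j = u.1) (hc : ∑ i, M i = c * u.1)
    (hM : ∀ i j, u.2 i j * u.2 i j = M i * u.2 i j) : deltaForm c u u = 0 := by
  have hrow i : u.2 i ⬝ᵥ u.2 i = M i * u.1 := by
    simp only [dotProduct, hM, ← Finset.mul_sum, hu]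
  rw [deltaForm_apply, Finset.sum_congr rfl fun i _ => hrow i, ← Finset.sum_mul, hc]
  ring

/-- The pair `(a, x)` encodes a family of weak compositions of `a`: the matrix `x` is nonnegative
and each of its rows sums to `a`. The nonnegativity of `a` is a field since there may be no rows. -/
structure IsWeakComposition [LE K] (u : K × (ι → J → K)) : Prop where
  fst_nonneg : 0 ≤ u.1
  nonneg : ∀ i j, 0 ≤ u.2 i j
  sum_row : ∀ i, ∑ j, u.2 i j = u.1

namespace IsWeakComposition

variable [PartialOrder K]

theorem zero : IsWeakComposition (0 : K × (ι → J → K)) where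
  fst_nonneg := le_rfl
  nonneg _ _ := le_rfl
  sum_row _ := Finset.sum_const_zero

variable [IsOrderedAddMonoid K]

theorem add {u v : K × (ι → J → K)} (hu : IsWeakComposition u) (hv : IsWeakComposition v) :
    IsWeakComposition (u + v) where
  fst_nonneg := add_nonneg hu.fst_nonneg hv.fst_nonneg
  nonneg i j := add_nonneg (hu.nonneg i j) (hv.nonneg i j)
  sum_row i := by
    simp only [Prod.snd_add, Prod.fst_add, Pi.add_apply, Finset.sum_add_distrib, hu.sum_row,
      hv.sum_row]

theorem sum {u : P → K × (ι → J → K)} (t : Finset P) (hu : ∀ p ∈ t, IsWeakComposition (u p)) :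
    IsWeakComposition (∑ p ∈ t, u p) :=
  Finset.sum_induction u IsWeakComposition (fun _ _ => add) zero hu

end IsWeakComposition

variable [Fintype ι] [LinearOrder K] [IsStrictOrderedRing K] {c : K} {M : ι → K}
  {u v : K × (ι → J → K)}

theorem sum_splitDefect_nonneg (hu : IsWeakComposition u) (hv : IsWeakComposition v)
    (hM : ∀ i j, (u + v).2 i j ≤ M i) :
    0 ≤ ∑ i, ∑ j, splitDefect (M i) u.1 v.1 (u.2 i j) (v.2 i j) :=
  Finset.sum_nonneg fun i _ => Finset.sum_nonneg fun j _ =>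
    splitDefect_nonneg (hu.nonneg i j) (hv.nonneg i j) (hM i j)

theorem deltaForm_nonneg (hu : IsWeakComposition u) (hv : IsWeakComposition v)
    (hM : ∀ i j, (u + v).2 i j ≤ M i) (hc : ∑ i, M i ≤ c * (u + v).1) (hpos : 0 < (u + v).1) :
    0 ≤ deltaForm c u v := by
  have hterm : 0 ≤ u.1 * v.1 * (u + v).1 * (c * (u + v).1 - ∑ i, M i) :=
    mul_nonneg (mul_nonneg (mul_nonneg hu.fst_nonneg hv.fst_nonneg) hpos.le) (sub_nonneg.2 hc)
  refine nonneg_of_mul_nonneg_right ?_ (pow_pos hpos 2)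
  rw [sq_mul_deltaForm c M hu.sum_row hv.sum_row]
  exact add_nonneg hterm (sum_splitDefect_nonneg hu hv hM)

theorem eq_of_deltaForm_eq_zero (hu : IsWeakComposition u) (hv : IsWeakComposition v)
    (hM : ∀ i j, (u + v).2 i j ≤ M i) (hc : ∑ i, M i ≤ c * (u + v).1)
    (hu₁ : 0 < u.1) (hv₁ : 0 < v.1) (h : deltaForm c u v = 0) :
    ∑ i, M i = c * (u + v).1 ∧ (u + v).1 • u = u.1 • (u + v) ∧
      ∀ i j, (u + v).2 i j * (u + v).2 i j = M i * (u + v).2 i j := by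
  have hpos : 0 < u.1 * v.1 * (u + v).1 := mul_pos (mul_pos hu₁ hv₁) (add_pos hu₁ hv₁)
  have hdefect i j : 0 ≤ splitDefect (M i) u.1 v.1 (u.2 i j) (v.2 i j) :=
    splitDefect_nonneg (hu.nonneg i j) (hv.nonneg i j) (hM i j)
  have hsplit := sq_mul_deltaForm c M hu.sum_row hv.sum_row
  rw [h, mul_zero, eq_comm, add_eq_zero_iff_of_nonneg
    (mul_nonneg hpos.le (sub_nonneg.2 hc)) (sum_splitDefect_nonneg hu hv hM)] at hsplit
  obtain ⟨hcM, hsum⟩ := hsplit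
  have hzero i j : splitDefect (M i) u.1 v.1 (u.2 i j) (v.2 i j) = 0 := by
    rw [Fintype.sum_eq_zero_iff_of_nonneg fun i => Finset.sum_nonneg fun j _ => hdefect i j] at hsum
    exact congrFun ((Fintype.sum_eq_zero_iff_of_nonneg (hdefect i)).1 (congrFun hsum i)) j
  have hentry i j := eq_of_splitDefect_eq_zero hu₁ hv₁ (hu.nonneg i j) (hv.nonneg i j) (hM i j)
    (hzero i j)
  refine ⟨(sub_eq_zero.1 ((mul_eq_zero.1 hcM).resolve_left hpos.ne')).symm, ?_,
    fun i j => (hentry i j).2⟩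
  exact Prod.ext (mul_comm _ _) (funext₂ fun i j => (hentry i j).1)

theorem deltaForm_self_eq_zero_of_deltaForm_eq_zero (hu : IsWeakComposition u)
    (hv : IsWeakComposition v) (hM : ∀ i j, (u + v).2 i j ≤ M i) (hc : ∑ i, M i ≤ c * (u + v).1)
    (hu₁ : 0 < u.1) (hv₁ : 0 < v.1) (h : deltaForm c u v = 0) :
    deltaForm c (u + v) (u + v) = 0 ∧ deltaForm c u u = 0 := by
  obtain ⟨hcM, hprop, hentry⟩ := eq_of_deltaForm_eq_zero hu hv hM hc hu₁ hv₁ h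
  have hadd : deltaForm c (u + v) (u + v) = 0 :=
    deltaForm_self_eq_zero_of_mul_self_eq (hu.add hv).sum_row hcM hentry
  refine ⟨hadd, ?_⟩
  have hscale := congrArg (fun w => deltaForm c w w) hprop
  simp only [map_smul, LinearMap.smul_apply, hadd, smul_eq_mul, mul_zero] at hscale
  have hpos : (u + v).1 ≠ 0 := (add_pos hu₁ hv₁).ne'
  exact (mul_eq_zero_iff_left hpos).1 ((mul_eq_zero_iff_left hpos).1 hscale)

variable [Fintype P] {w : P → K × (ι → J → K)}

theorem sum_deltaForm_self_le (hw : ∀ p, IsWeakComposition (w p))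
    (hM : ∀ i j, (∑ p, w p).2 i j ≤ M i) (hc : ∑ i, M i ≤ c * (∑ p, w p).1)
    (hpos : 0 < (∑ p, w p).1) :
    ∑ p, deltaForm c (w p) (w p) ≤ deltaForm c (∑ p, w p) (∑ p, w p) := by
  classical
  rw [bilinForm_sum_self]
  refine le_add_of_nonneg_right (Finset.sum_nonneg fun p _ => ?_)
  rw [← Finset.add_sum_erase _ w (Finset.mem_univ p)] at hM hc hpos
  exact deltaForm_nonneg (hw p) (.sum _ fun q _ => hw q) hM hc hpos

theorem sum_deltaForm_self_eq_iff [Nontrivial P] (hw : ∀ p, IsWeakComposition (w p))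
    (hM : ∀ i j, (∑ p, w p).2 i j ≤ M i) (hc : ∑ i, M i ≤ c * (∑ p, w p).1)
    (hpos : ∀ p, 0 < (w p).1) :
    ∑ p, deltaForm c (w p) (w p) = deltaForm c (∑ p, w p) (∑ p, w p) ↔
      deltaForm c (∑ p, w p) (∑ p, w p) = 0 ∧ ∀ p, deltaForm c (w p) (w p) = 0 := by
  classical
  refine ⟨fun heq => ?_, fun ⟨hsum, hw₀⟩ => by simp only [hsum, hw₀, Finset.sum_const_zero]⟩
  let rest p := ∑ q ∈ Finset.univ.erase p, w q
  have hrest p : IsWeakComposition (rest p) := .sum _ fun q _ => hw q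
  have hadd p : w p + rest p = ∑ p, w p := Finset.add_sum_erase _ w (Finset.mem_univ p)
  have hrest_pos p : 0 < (rest p).1 := by
    rw [Prod.fst_sum]
    exact Finset.sum_pos (fun q _ => hpos q) (Finset.univ_nontrivial.erase_nonempty)
  have hcross_nonneg p : 0 ≤ deltaForm c (w p) (rest p) :=
    deltaForm_nonneg (M := M) (hw p) (hrest p) (by rwa [hadd]) (by rwa [hadd])
      (add_pos (hpos p) (hrest_pos p))
  rw [bilinForm_sum_self, left_eq_add, Fintype.sum_eq_zero_iff_of_nonneg hcross_nonneg] at heq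
  have hvanish p := deltaForm_self_eq_zero_of_deltaForm_eq_zero (M := M) (hw p) (hrest p)
    (by rwa [hadd]) (by rwa [hadd]) (hpos p) (hrest_pos p) (congrFun heq p)
  simp only [hadd] at hvanish
  exact ⟨(hvanish (Classical.arbitrary P)).1, fun p => (hvanish p).2⟩

end DeltaForm

theorem PartitionOf.finsum_cast_parts {n : ℕ} (ρ : PartitionOf n) :
    ∑ᶠ j, (ρ.parts j : ℚ) = n := by
  obtain ⟨N, hN⟩ := ρ.eventually_zero
  have hfinite : ρ.parts.support.Finite := (Set.finite_lt_nat N).subset fun j hj =>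
    lt_of_not_ge fun hNj => hj (hN j hNj)
  calc ∑ᶠ j, (ρ.parts j : ℚ) = ((∑ᶠ j, ρ.parts j : ℕ) : ℚ) :=
        ((Nat.castAddMonoidHom ℚ).map_finsum hfinite).symm
    _ = n := by rw [ρ.sum_eq]

theorem DeltaStat_congr {g k m n : ℕ} (hk : 1 ≤ k) {ρ : Fin k → PartitionOf m}
    {τ : Fin k → PartitionOf n} (h : ∀ i, (ρ i).parts = (τ i).parts) :
    DeltaStat g k ρ = DeltaStat g k τ := by
  obtain rfl : m = n := by rw [← (ρ ⟨0, hk⟩).sum_eq, h, (τ ⟨0, hk⟩).sum_eq]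
  simp only [DeltaStat, h]

namespace SumsToUpToPerm

variable {s n : ℕ} {m : Fin s → ℕ} {ν : ∀ p, PartitionOf (m p)} {μ : PartitionOf n}

theorem exists_perm (h : SumsToUpToPerm ν μ) :
    ∃ σ : Fin s → Equiv.Perm ℕ, ∀ i, ∑ p, (ν p).parts (σ p i) = μ.parts i := by
  obtain ⟨x, hx, hsum⟩ := h
  choose σ hσ using hx
  exact ⟨σ, fun i => by simp only [← hsum i, hσ, Function.comp_apply]⟩

theorem parts_eq [Subsingleton (Fin s)] (h : SumsToUpToPerm ν μ) (p : Fin s) :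
    (ν p).parts = μ.parts := by
  obtain ⟨σ, hσ⟩ := h.exists_perm
  have hμ : (ν p).parts ∘ σ p = μ.parts := funext fun i => by
    rw [← hσ i, Fintype.sum_subsingleton _ p, Function.comp_apply]
  rw [← hμ, comp_perm_eq_of_antitone (ν p).antitone (hμ ▸ μ.antitone)]

end SumsToUpToPerm

/-- The pair `u = (m, x)` encodes the tuple `ρ` of partitions of `m`: up to rearrangement, row `i`
of the matrix `x` lists the parts of `ρ i`, all nonzero ones among them. -/
structure IsTableauOf {k m N : ℕ} (u : ℚ × (Fin k → Fin N → ℚ)) (ρ : Fin k → PartitionOf m) :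
    Prop where
  fst_eq : u.1 = m
  exists_perm : ∀ i, ∃ σ : Equiv.Perm ℕ, (∀ j, N ≤ j → (ρ i).parts (σ j) = 0) ∧
    ∀ j : Fin N, u.2 i j = (ρ i).parts (σ j)

namespace IsTableauOf

variable {k m N : ℕ} {u : ℚ × (Fin k → Fin N → ℚ)} {ρ : Fin k → PartitionOf m}

theorem sum_apply (h : IsTableauOf u ρ) (i : Fin k) {F : ℚ → ℚ} (hF : F 0 = 0) :
    ∑ j, F (u.2 i j) = ∑ᶠ j, F ((ρ i).parts j) := by
  obtain ⟨σ, hzero, hσ⟩ := h.exists_perm i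
  rw [finsum_eq_sum_fin_comp_perm σ (N := N) fun j hj => by simp [hzero j hj, hF]]
  simp only [hσ]

theorem isWeakComposition (h : IsTableauOf u ρ) : IsWeakComposition u where
  fst_nonneg := h.fst_eq ▸ m.cast_nonneg
  nonneg i j := by
    obtain ⟨σ, -, hσ⟩ := h.exists_perm i
    exact hσ j ▸ Nat.cast_nonneg _
  sum_row i := by
    rw [h.fst_eq, ← (ρ i).finsum_cast_parts]
    exact h.sum_apply i (F := id) rfl

theorem le_parts_zero (h : IsTableauOf u ρ) (i : Fin k) (j : Fin N) :
    u.2 i j ≤ (ρ i).parts 0 := by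
  obtain ⟨σ, -, hσ⟩ := h.exists_perm i
  rw [hσ]
  exact_mod_cast (ρ i).antitone (Nat.zero_le _)

theorem sum_parts_zero_le {g : ℕ} (h : IsTableauOf u ρ) (hδ : 0 ≤ deltaStat g k ρ) :
    ∑ i, ((ρ i).parts 0 : ℚ) ≤ (2 * g - 2 + k) * u.1 := by
  rw [h.fst_eq]
  exact sub_nonneg.1 hδ

theorem DeltaStat_eq (h : IsTableauOf u ρ) (g : ℕ) :
    DeltaStat g k ρ = deltaForm (2 * g - 2 + k : ℚ) u u / 2 := by
  have hsq i : u.2 i ⬝ᵥ u.2 i = ∑ᶠ j, ((ρ i).parts j : ℚ) ^ 2 := by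
    rw [← h.sum_apply i (F := (· ^ 2)) (by simp)]
    simp only [dotProduct, sq]
  simp only [DeltaStat, deltaForm_apply, hsq, h.fst_eq]
  ring

end IsTableauOf

theorem exists_isTableauOf_sum {k s n : ℕ} (hk : 1 ≤ k) {μ : Fin k → PartitionOf n}
    {m : Fin s → ℕ} {ν : ∀ p, Fin k → PartitionOf (m p)}
    (hsum : ∀ i, SumsToUpToPerm (fun p => ν p i) (μ i)) :
    ∃ (N : ℕ) (u : Fin s → ℚ × (Fin k → Fin N → ℚ)),
      (∀ p, IsTableauOf (u p) (ν p)) ∧ IsTableauOf (∑ p, u p) μ := by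
  choose σ hσ using fun i => (hsum i).exists_perm
  choose bound hbound using fun i => (μ i).eventually_zero
  let N := Finset.univ.sup bound
  have hμ i j (hj : N ≤ j) : (μ i).parts j = 0 :=
    hbound i j ((Finset.le_sup (Finset.mem_univ i)).trans hj)
  have hν p i j (hj : N ≤ j) : (ν p i).parts (σ i p j) = 0 := by
    have := (hσ i j).trans (hμ i j hj)
    exact Finset.sum_eq_zero_iff.1 this p (Finset.mem_univ p)
  let u p : ℚ × (Fin k → Fin N → ℚ) := (m p, fun i j => (ν p i).parts (σ i p j))
  have hu p : IsTableauOf (u p) (ν p) := ⟨rfl, fun i => ⟨σ i p, hν p i, fun j => rfl⟩⟩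
  have hrow i j : (∑ p, u p).2 i j = (μ i).parts j := by
    simp only [u, Prod.snd_sum, Finset.sum_apply, ← hσ i j, Nat.cast_sum]
  have hn : (∑ p, u p).1 = n := by
    let i₀ : Fin k := ⟨0, hk⟩
    rw [← (IsWeakComposition.sum _ fun p _ => (hu p).isWeakComposition).sum_row i₀,
      ← (μ i₀).finsum_cast_parts, finsum_eq_sum_fin_comp_perm (Equiv.refl ℕ) (N := N)
        fun j hj => by simp [hμ i₀ j hj]]
    exact Finset.sum_congr rfl fun j _ => hrow i₀ j
  exact ⟨N, u, hu, hn, fun i => ⟨Equiv.refl ℕ, hμ i, hrow i⟩⟩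

/-- Proposition on `Δ`: if `δ(𝛍) ≥ 0` and, for each `i`, the partitions
`ν^{i,1},…,ν^{i,s}` sum to `μⁱ` up to permutation of parts, then
`Σ_p Δ(𝛎ᵖ) ≤ Δ(𝛍)`, with equality iff `s = 1` (in which case `𝛎¹ = 𝛍`) or
`Δ(𝛍) = 0` and all `Δ(𝛎ᵖ) = 0`. -/
theorem stmt_5 (g k n : ℕ) (hk : 1 ≤ k) (hn : 1 ≤ n)
    (μ : Fin k → PartitionOf n) (hδ : 0 ≤ deltaStat g k μ)
    (s : ℕ) (hs : 1 ≤ s) (np : Fin s → ℕ) (hnp : ∀ p, 1 ≤ np p)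
    (ν : ∀ p : Fin s, Fin k → PartitionOf (np p))
    (hsum : ∀ i, SumsToUpToPerm (fun p => ν p i) (μ i)) :
    ∑ p, DeltaStat g k (ν p) ≤ DeltaStat g k μ ∧
    (∑ p, DeltaStat g k (ν p) = DeltaStat g k μ ↔
      s = 1 ∨ (DeltaStat g k μ = 0 ∧ ∀ p, DeltaStat g k (ν p) = 0)) ∧
    (s = 1 → ∀ p i, (ν p i).parts = (μ i).parts) := by
  obtain ⟨N, u, hu, hU⟩ := exists_isTableauOf_sum hk hsum
  have hw p := (hu p).isWeakComposition
  have hM := hU.le_parts_zero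
  have hc := hU.sum_parts_zero_le hδ
  have hΔμ := hU.DeltaStat_eq g
  have hΔν p := (hu p).DeltaStat_eq g
  have hparts : s = 1 → ∀ p i, (ν p i).parts = (μ i).parts := by
    rintro rfl p i
    exact (hsum i).parts_eq p
  refine ⟨?_, ?_, hparts⟩
  · have hpos : 0 < (∑ p, u p).1 := by rw [hU.fst_eq]; exact_mod_cast hn
    simp only [hΔμ, hΔν, ← Finset.sum_div]
    gcongr
    exact sum_deltaForm_self_le hw hM hc hpos
  · obtain rfl | hs₂ : s = 1 ∨ 2 ≤ s := by omega
    · simp [DeltaStat_congr hk (hparts rfl 0)]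
    · have : Nontrivial (Fin s) := Fin.nontrivial_iff_two_le.2 hs₂
      have hpos p : 0 < (u p).1 := by rw [(hu p).fst_eq]; exact_mod_cast hnp p
      have hs₁ : s ≠ 1 := by omega
      simpa [hΔμ, hΔν, ← Finset.sum_div, hs₁, div_left_inj'] using
        sum_deltaForm_self_eq_iff hw hM hc hpos
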